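/- Let α_1,…,α_n, β_1,…,β_n ∈ ℂ with Re(β_i − α_i) > 0 for each i, and let H = h_{α_1,β_1} ∗ ⋯ ∗ h_{α_n,β_n} be the n-fold convolution over ℝ. Then H is infinitely differentiable at every point of ℝ ∖ {−n/2 + k : k = 0, 1, …, n}. -/

import Mathlib

open Complex Filter Set Finset MeasureTheory
open scoped Real

noncomputable section

/-- The function `h_{α,β}(φ) = e^{2πiαφ}(1 + e^{2πiφ})^{β-α}/Γ(β-α+1)` on `(-1/2, 1/2)`,
extended by `0` (principal branch power). -/
def hfun (α β : ℂ) : ℝ → ℂ := fun φ =>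
  if φ ∈ Set.Ioo (-(1 : ℝ) / 2) ((1 : ℝ) / 2) then
    Complex.exp (2 * (π : ℂ) * Complex.I * α * (φ : ℂ)) *
      (1 + Complex.exp (2 * (π : ℂ) * Complex.I * (φ : ℂ))) ^ (β - α) /
        Complex.Gamma (β - α + 1)
  else 0

/-- Convolution over `ℝ`: `(f ∗ g)(x) = ∫ f(x - y) g(y) dy`. -/
def conv (f g : ℝ → ℂ) : ℝ → ℂ := fun x => ∫ y : ℝ, f (x - y) * g y

/-- The iterated convolution `f₁ ∗ (f₂ ∗ (⋯ ∗ fₙ))` of a list of functions. -/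
def convList : List (ℝ → ℂ) → (ℝ → ℂ)
  | [] => fun _ => 0
  | [f] => f
  | f :: g :: rest => conv f (convList (g :: rest))

open scoped Topology Convolution ContDiff Pointwise

/-!
The singular support of a convolution of compactly supported functions lies in the sum of their
singular supports. Indeed, split `f = f₁ + f₂` and `g = g₁ + g₂` with `f₁`, `g₁` smooth and `f₂`,
`g₂` supported near the singular supports `S`, `T`. Then
`f ⋆ g = f₁ ⋆ g + f₂ ⋆ g₁ + f₂ ⋆ g₂`, where the first two terms are smooth and the last one vanishes
away from a small neighbourhood of `S + T`.

Each `h_{α,β}` is smooth off `{-1/2, 1/2}`, and the `n`-fold sum of this set is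
`{-n/2 + k : k ≤ n}`. It is integrable as soon as `Re (β - α) > -1`, because
`1 + e^{2πiφ} = 2 cos(πφ) e^{πiφ}` vanishes to first order at the endpoints.
-/

section Convolution

lemma exists_isOpen_eventually_notMem_add {G : Type*} [Add G] [TopologicalSpace G]
    [ContinuousAdd G] [T2Space G] {S T : Set G} (hS : IsCompact S) (hT : IsCompact T) {x : G}
    (hx : x ∉ S + T) :
    ∃ U V : Set G, IsOpen U ∧ IsOpen V ∧ S ⊆ U ∧ T ⊆ V ∧ ∀ᶠ y in 𝓝 x, y ∉ U + V := by
  obtain ⟨W, O, hW, hO, hSTW, hxO, hWO⟩ := SeparatedNhds.of_isCompact_isCompact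
    (hS.add hT) isCompact_singleton (Set.disjoint_singleton_right.2 hx)
  obtain ⟨U, V, hU, hV, hSU, hTV, hUV⟩ := generalized_tube_lemma hS hT (hW.preimage continuous_add)
    fun p hp => hSTW (Set.add_mem_add hp.1 hp.2)
  refine ⟨U, V, hU, hV, hSU, hTV, ?_⟩
  have hUVW : U + V ⊆ W := Set.add_subset_iff.2 fun _ ha _ hb => hUV (Set.mk_mem_prod ha hb)
  filter_upwards [hO.mem_nhds (hxO rfl)] with y hyO hyUV
  exact Set.disjoint_left.1 hWO (hUVW hyUV) hyO

variable {E F F' F'' : Type*} [NormedAddCommGroup F] [NormedSpace ℝ F]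
  [NormedAddCommGroup F'] [NormedSpace ℝ F'] [NormedAddCommGroup F''] [NormedSpace ℝ F'']

lemma convolutionExistsAt_of_notMem_add {G : Type*} [AddCommGroup G] [MeasurableSpace G]
    {μ : Measure G} (L : F →L[ℝ] F' →L[ℝ] F'') {f : G → F} {g : G → F'} {x : G}
    (hx : x ∉ f.support + g.support) : ConvolutionExistsAt f g x L μ := by
  have h_zero : (fun t => L (f t) (g (x - t))) = 0 := by
    ext t
    by_contra ht
    exact hx ⟨t, fun hf => ht (by simp [hf]), x - t, fun hg => ht (by simp [hg]), by simp⟩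
  rw [ConvolutionExistsAt, h_zero]
  exact integrable_zero _ _ _

variable [NormedAddCommGroup E] [NormedSpace ℝ E]

/-- `f` is an integrable, compactly supported function whose singular support lies in the compact
set `S`. The set is not required to be minimal; bundling its compactness makes the notion stable
under convolution, which adds these sets. -/
structure IsSmoothOffCompact [MeasurableSpace E] (f : E → F) (S : Set E) (μ : Measure E) :
    Prop where
  integrable : Integrable f μ
  hasCompactSupport : HasCompactSupport f
  isCompact : IsCompact S
  contDiffAt : ∀ x ∉ S, ContDiffAt ℝ ∞ f x

variable [FiniteDimensional ℝ E]

lemma exists_eq_add_contDiff_support_subset {n : ℕ∞} {f : E → F} {S U : Set E}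
    (hS : IsClosed S) (hU : IsOpen U) (hSU : S ⊆ U) (hf : ∀ x ∉ S, ContDiffAt ℝ n f x) :
    ∃ f₁ f₂ : E → F, f = f₁ + f₂ ∧ ContDiff ℝ n f₁ ∧ f₁.support ⊆ f.support ∧ f₂.support ⊆ U := by
  obtain ⟨χ, hχ_one, hχ_zero, -⟩ :=
    exists_contMDiffMap_one_nhds_of_subset_interior (n := n) (modelWithCornersSelf ℝ E) hS
      (hSU.trans hU.interior_eq.ge)
  have hχ : ContDiff ℝ n χ := χ.contMDiff.contDiff
  refine ⟨fun x => (1 - χ x) • f x, fun x => χ x • f x, ?_, contDiff_iff_contDiffAt.2 fun x => ?_,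
    Function.support_smul_subset_right _ _, ?_⟩
  · ext x
    simp [sub_smul]
  · by_cases hx : x ∈ S
    · refine (contDiffAt_const (c := (0 : F))).congr_of_eventuallyEq ?_
      filter_upwards [hχ_one.filter_mono (nhds_le_nhdsSet hx)] with y hy
      simp [hy]
    · exact (contDiffAt_const.sub hχ.contDiffAt).smul (hf x hx)
  · exact (Function.support_smul_subset_left _ _).trans (Function.support_subset_iff'.2 hχ_zero)

variable [MeasurableSpace E] [BorelSpace E] {μ : Measure E} [μ.IsAddHaarMeasure]
  (L : F →L[ℝ] F' →L[ℝ] F'')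

lemma contDiffAt_convolution_of_notMem_add {n : ℕ∞} {f : E → F} {g : E → F'} {S T : Set E}
    (hf : LocallyIntegrable f μ) (hfc : HasCompactSupport f)
    (hg : LocallyIntegrable g μ) (hgc : HasCompactSupport g)
    (hS : IsCompact S) (hT : IsCompact T)
    (hfS : ∀ x ∉ S, ContDiffAt ℝ n f x) (hgT : ∀ x ∉ T, ContDiffAt ℝ n g x)
    {x : E} (hx : x ∉ S + T) : ContDiffAt ℝ n (f ⋆[L, μ] g) x := by
  obtain ⟨U, V, hU, hV, hSU, hTV, hUV⟩ := exists_isOpen_eventually_notMem_add hS hT hx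
  obtain ⟨f₁, f₂, rfl, hf₁, hf₁_supp, hf₂_supp⟩ :=
    exists_eq_add_contDiff_support_subset hS.isClosed hU hSU hfS
  obtain ⟨g₁, g₂, rfl, hg₁, hg₁_supp, hg₂_supp⟩ :=
    exists_eq_add_contDiff_support_subset hT.isClosed hV hTV hgT
  have hf₁c : HasCompactSupport f₁ := hfc.mono hf₁_supp
  have hg₁c : HasCompactSupport g₁ := hgc.mono hg₁_supp
  have hf₂ : LocallyIntegrable f₂ μ := by
    simpa using hf.sub hf₁.continuous.locallyIntegrable
  have h_local : (f₁ + f₂) ⋆[L, μ] (g₁ + g₂) =ᶠ[𝓝 x]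
      f₁ ⋆[L, μ] (g₁ + g₂) + f₂ ⋆[L, μ] g₁ := by
    filter_upwards [hUV] with y hy
    have hy' : y ∉ f₂.support + g₂.support := fun h => hy (Set.add_subset_add hf₂_supp hg₂_supp h)
    have h₂₁ := hg₁c.convolutionExists_right L hf₂ hg₁.continuous y
    have h₂₂ := convolutionExistsAt_of_notMem_add (μ := μ) L hy'
    have h_zero : (f₂ ⋆[L, μ] g₂) y = 0 :=
      Function.notMem_support.1 fun h => hy' (support_convolution_subset L h)
    have h₂ : ConvolutionExistsAt f₂ (g₁ + g₂) y L μ := by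
      simpa only [ConvolutionExistsAt, Pi.add_apply, map_add] using! h₂₁.add h₂₂
    rw [(hf₁c.convolutionExists_left L hf₁.continuous hg y).add_distrib h₂,
      h₂₁.distrib_add h₂₂, h_zero, add_zero, Pi.add_apply]
  exact ((hf₁c.contDiff_convolution_left L hf₁ hg).add
    (hg₁c.contDiff_convolution_right L hf₂ hg₁)).contDiffAt.congr_of_eventuallyEq h_local

lemma IsSmoothOffCompact.convolution {f : E → F} {g : E → F'} {S T : Set E}
    (hf : IsSmoothOffCompact f S μ) (hg : IsSmoothOffCompact g T μ) :
    IsSmoothOffCompact (f ⋆[L, μ] g) (S + T) μ where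
  integrable := hf.integrable.integrable_convolution L hg.integrable
  hasCompactSupport := hf.hasCompactSupport.convolution L hg.hasCompactSupport
  isCompact := hf.isCompact.add hg.isCompact
  contDiffAt _ hx := contDiffAt_convolution_of_notMem_add L
    hf.integrable.locallyIntegrable hf.hasCompactSupport
    hg.integrable.locallyIntegrable hg.hasCompactSupport
    hf.isCompact hg.isCompact hf.contDiffAt hg.contDiffAt hx

end Convolution

section ConvList

lemma conv_eq_convolution (f g : ℝ → ℂ) : conv f g = f ⋆[ContinuousLinearMap.mul ℝ ℂ] g := by
  ext x
  rw [convolution_eq_swap]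
  rfl

lemma IsSmoothOffCompact.convList_cons {S : Set ℝ} (f : ℝ → ℂ) (l : List (ℝ → ℂ))
    (hl : ∀ g ∈ f :: l, IsSmoothOffCompact g S volume) :
    IsSmoothOffCompact (convList (f :: l)) ((l.length + 1) • S) volume := by
  induction l generalizing f with
  | nil => simpa [convList] using hl
  | cons g l ih =>
    rw [convList, conv_eq_convolution, List.length_cons, succ_nsmul']
    exact (hl f List.mem_cons_self).convolution _
      (ih g fun k hk => hl k (List.mem_cons_of_mem f hk))

lemma exists_nsmul_add_nsmul_of_mem_nsmul_pair {M : Type*} [AddCommMonoid M] {a b x : M} {n : ℕ}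
    (hx : x ∈ n • ({a, b} : Set M)) : ∃ i j : ℕ, i + j = n ∧ x = i • a + j • b := by
  induction n generalizing x with
  | zero => exact ⟨0, 0, rfl, by simpa using hx⟩
  | succ n ih =>
    rw [succ_nsmul] at hx
    obtain ⟨y, hy, c, rfl | rfl, rfl⟩ := Set.mem_add.1 hx <;> obtain ⟨i, j, hij, rfl⟩ := ih hy
    · exact ⟨i + 1, j, by omega, by rw [succ_nsmul, add_right_comm]⟩
    · exact ⟨i, j + 1, by omega, by rw [succ_nsmul, add_assoc]⟩

end ConvList

section Hfun

lemma contDiffAt_indicator_of_notMem_frontier {𝕜 E F : Type*} [NontriviallyNormedField 𝕜]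
    [NormedAddCommGroup E] [NormedSpace 𝕜 E] [NormedAddCommGroup F] [NormedSpace 𝕜 F]
    {n : WithTop ℕ∞} {f : E → F} {s : Set E} {x : E}
    (hf : x ∈ interior s → ContDiffAt 𝕜 n f x) (hx : x ∉ frontier s) :
    ContDiffAt 𝕜 n (s.indicator f) x := by
  by_cases hxs : x ∈ interior s
  · refine (hf hxs).congr_of_eventuallyEq ?_
    filter_upwards [mem_interior_iff_mem_nhds.1 hxs] with y hy using Set.indicator_of_mem hy f
  · have hx_closure : x ∉ closure s := fun h => hx ⟨h, hxs⟩
    refine (contDiffAt_const (c := (0 : F))).congr_of_eventuallyEq ?_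
    filter_upwards [isClosed_closure.isOpen_compl.mem_nhds hx_closure] with y hy
    exact Set.indicator_of_notMem (fun h => hy (subset_closure h)) f

lemma hfun_eq_indicator (α β : ℂ) :
    hfun α β = (Set.Ioo (-(1 : ℝ) / 2) (1 / 2)).indicator fun φ : ℝ =>
      exp (2 * π * I * α * φ) * (1 + exp (2 * π * I * φ)) ^ (β - α) / Gamma (β - α + 1) := by
  ext φ
  simp only [hfun, Set.indicator_apply]

lemma one_add_exp_two_pi_mul_I_mul (z : ℂ) :
    1 + exp (2 * π * I * z) = 2 * cos (π * z) * exp (π * z * I) := by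
  rw [Complex.cos, mul_div_cancel₀ _ two_ne_zero, add_mul, ← exp_add, ← exp_add, add_comm]
  ring_nf
  simp [add_comm]

lemma norm_one_add_exp_two_pi_mul_I_mul (x : ℝ) :
    ‖1 + exp (2 * π * I * x)‖ = 2 * |Real.cos (π * x)| := by
  rw [one_add_exp_two_pi_mul_I_mul, norm_mul, norm_mul, ← ofReal_mul, norm_exp_ofReal_mul_I,
    ← ofReal_cos, norm_real]
  simp

lemma one_sub_two_mul_abs_le_cos_pi_mul {x : ℝ} (hx : |x| ≤ 1 / 2) :
    1 - 2 * |x| ≤ Real.cos (π * x) := by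
  have h := Real.one_sub_mul_le_cos (x := π * |x|) (by positivity) (by nlinarith [Real.pi_pos])
  have h_abs : Real.cos (π * |x|) = Real.cos (π * x) := by
    rw [← Real.cos_abs (π * x), abs_mul, abs_of_pos Real.pi_pos]
  rw [h_abs] at h
  field_simp at h
  exact h

lemma one_add_exp_two_pi_mul_I_mul_mem_slitPlane {x : ℝ} (hx : x ∈ Set.Ioo (-(1 : ℝ) / 2) (1 / 2)) :
    1 + exp (2 * π * I * x) ∈ slitPlane := by
  have h_abs : |x| < 1 / 2 := abs_lt.2 ⟨by linarith [hx.1], hx.2⟩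
  have h_cos : 0 < Real.cos (π * x) := by
    linarith [one_sub_two_mul_abs_le_cos_pi_mul h_abs.le]
  have h_re : (1 + exp (2 * π * I * x)).re = 2 * Real.cos (π * x) * Real.cos (π * x) := by
    rw [one_add_exp_two_pi_mul_I_mul, ← ofReal_mul, ← ofReal_cos, ← ofReal_ofNat, ← ofReal_mul,
      re_ofReal_mul, exp_ofReal_mul_I_re]
  exact Or.inl (by rw [h_re]; positivity)

lemma rpow_le_rpow_add_rpow {a b u : ℝ} (ha : 0 < a) (hau : a ≤ u) (hub : u ≤ b) (s : ℝ) :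
    u ^ s ≤ a ^ s + b ^ s := by
  have hu : 0 < u := ha.trans_le hau
  rcases le_total 0 s with hs | hs
  · exact (Real.rpow_le_rpow hu.le hub hs).trans (le_add_of_nonneg_left (by positivity))
  · exact (Real.rpow_le_rpow_of_nonpos ha hau hs).trans
      (le_add_of_nonneg_right (Real.rpow_nonneg (hu.le.trans hub) s))

lemma integrableOn_Ioo_sub_const_rpow {s : ℝ} (hs : -1 < s) (a b : ℝ) :
    IntegrableOn (fun x => (x - a) ^ s) (Set.Ioo a b) := by
  rcases le_total a b with hab | hba
  · rw [← intervalIntegrable_iff_integrableOn_Ioo_of_le hab]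
    have h := intervalIntegral.intervalIntegrable_rpow' (a := 0) (b := b - a) hs
    simpa using h.comp_sub_right a
  · simp [Set.Ioo_eq_empty hba.not_gt]

lemma integrableOn_Ioo_const_sub_rpow {s : ℝ} (hs : -1 < s) (a b : ℝ) :
    IntegrableOn (fun x => (b - x) ^ s) (Set.Ioo a b) := by
  rcases le_total a b with hab | hba
  · rw [← intervalIntegrable_iff_integrableOn_Ioo_of_le hab]
    have h := intervalIntegral.intervalIntegrable_rpow' (a := b - a) (b := 0) hs
    simpa using h.comp_sub_left b
  · simp [Set.Ioo_eq_empty hba.not_gt]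

lemma norm_one_add_exp_two_pi_mul_I_mul_rpow_le {x : ℝ}
    (hx : x ∈ Set.Ioo (-(1 : ℝ) / 2) (1 / 2)) (s : ℝ) :
    ‖1 + exp (2 * π * I * x)‖ ^ s ≤ (x - -1 / 2) ^ s + (1 / 2 - x) ^ s + 2 ^ s := by
  have hx_left : 0 < x - -1 / 2 := sub_pos.2 hx.1
  have hx_right : 0 < 1 / 2 - x := sub_pos.2 hx.2
  have h_abs : |x| ≤ 1 / 2 := abs_le.2 ⟨by linarith [hx.1], hx.2.le⟩
  have h_lower : 1 / 2 - |x| ≤ ‖1 + exp (2 * π * I * x)‖ := by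
    rw [norm_one_add_exp_two_pi_mul_I_mul]
    linarith [one_sub_two_mul_abs_le_cos_pi_mul h_abs, le_abs_self (Real.cos (π * x))]
  have h_upper : ‖1 + exp (2 * π * I * x)‖ ≤ 2 := by
    rw [norm_one_add_exp_two_pi_mul_I_mul]
    linarith [Real.abs_cos_le_one (π * x)]
  have h_left_nonneg : 0 ≤ (x - -1 / 2) ^ s := Real.rpow_nonneg hx_left.le s
  have h_right_nonneg : 0 ≤ (1 / 2 - x) ^ s := Real.rpow_nonneg hx_right.le s
  rcases le_total 0 x with hx0 | hx0
  · rw [abs_of_nonneg hx0] at h_lower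
    linarith [rpow_le_rpow_add_rpow hx_right h_lower h_upper s]
  · rw [abs_of_nonpos hx0] at h_lower
    linarith [rpow_le_rpow_add_rpow hx_left (by linarith) h_upper s]

lemma norm_cpow_le_norm_rpow_mul_exp (z w : ℂ) :
    ‖z ^ w‖ ≤ ‖z‖ ^ w.re * Real.exp (π * |w.im|) := by
  refine (norm_cpow_le z w).trans ?_
  rw [div_eq_mul_inv, ← Real.exp_neg]
  gcongr
  calc -(arg z * w.im) ≤ |arg z * w.im| := neg_le_abs _
    _ = |arg z| * |w.im| := abs_mul _ _
    _ ≤ π * |w.im| := by gcongr; exact abs_arg_le_pi z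

lemma integrableOn_one_add_exp_two_pi_mul_I_mul_cpow {c : ℂ} (hc : -1 < c.re) :
    IntegrableOn (fun x : ℝ => (1 + exp (2 * π * I * x)) ^ c) (Set.Ioo (-(1 : ℝ) / 2) (1 / 2)) := by
  have h_dom : IntegrableOn (fun x : ℝ => ((x - -1 / 2) ^ c.re + (1 / 2 - x) ^ c.re + 2 ^ c.re) *
      Real.exp (π * |c.im|)) (Set.Ioo (-(1 : ℝ) / 2) (1 / 2)) :=
    (((integrableOn_Ioo_sub_const_rpow hc _ _).add (integrableOn_Ioo_const_sub_rpow hc _ _)).add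
      (integrableOn_const (by simp))).mul_const _
  have h_meas : Measurable fun x : ℝ => (1 + exp (2 * π * I * x)) ^ c := by fun_prop
  refine h_dom.mono' h_meas.aestronglyMeasurable
    ((ae_restrict_mem measurableSet_Ioo).mono fun x hx => ?_)
  exact (norm_cpow_le_norm_rpow_mul_exp _ c).trans
    (mul_le_mul_of_nonneg_right (norm_one_add_exp_two_pi_mul_I_mul_rpow_le hx c.re)
      (Real.exp_pos _).le)

lemma integrable_hfun {α β : ℂ} (h : -1 < (β - α).re) : Integrable (hfun α β) := by
  rw [hfun_eq_indicator, integrable_indicator_iff measurableSet_Ioo]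
  refine Integrable.div_const ?_ _
  have h_cpow := integrableOn_one_add_exp_two_pi_mul_I_mul_cpow h
  rw [← IntegrableOn, ← integrableOn_Icc_iff_integrableOn_Ioo]
  rw [← integrableOn_Icc_iff_integrableOn_Ioo] at h_cpow
  exact h_cpow.continuousOn_mul (by fun_prop) isCompact_Icc

lemma hasCompactSupport_hfun (α β : ℂ) : HasCompactSupport (hfun α β) :=
  HasCompactSupport.intro isCompact_Icc fun _ hx =>
    if_neg fun hx' => hx (Set.Ioo_subset_Icc_self hx')

lemma contDiffAt_hfun (α β : ℂ) {n : WithTop ℕ∞} {x : ℝ} (hx : x ∉ ({-1 / 2, 1 / 2} : Set ℝ)) :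
    ContDiffAt ℝ n (hfun α β) x := by
  rw [hfun_eq_indicator]
  refine contDiffAt_indicator_of_notMem_frontier (fun hx_mem => ?_) ?_
  · rw [interior_Ioo] at hx_mem
    have h_cpow : AnalyticAt ℂ (fun z : ℂ => (1 + exp (2 * π * I * z)) ^ (β - α)) x :=
      AnalyticAt.cpow (by fun_prop) analyticAt_const
        (one_add_exp_two_pi_mul_I_mul_mem_slitPlane hx_mem)
    have h_complex : AnalyticAt ℂ (fun z : ℂ => exp (2 * π * I * α * z) *
        (1 + exp (2 * π * I * z)) ^ (β - α) * (Gamma (β - α + 1))⁻¹) x :=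
      (AnalyticAt.mul (by fun_prop) h_cpow).mul analyticAt_const
    exact (h_complex.contDiffAt.restrict_scalars ℝ).comp x ofRealCLM.contDiff.contDiffAt
  · rwa [frontier_Ioo (by norm_num)]

lemma isSmoothOffCompact_hfun {α β : ℂ} (h : -1 < (β - α).re) :
    IsSmoothOffCompact (hfun α β) {-1 / 2, 1 / 2} volume where
  integrable := integrable_hfun h
  hasCompactSupport := hasCompactSupport_hfun α β
  isCompact := (Set.toFinite _).isCompact
  contDiffAt _ hx := contDiffAt_hfun α β hx

end Hfun

theorem convolution_smooth_general (n : ℕ) (hn : 1 ≤ n) (α β : Fin n → ℂ)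
    (h : ∀ i, -1 < (β i - α i).re)
    (H : ℝ → ℂ) (hH : H = convList (List.ofFn fun i => hfun (α i) (β i))) :
    ∀ φ : ℝ, (∀ k : ℕ, k ≤ n → φ ≠ -(n : ℝ) / 2 + (k : ℝ)) →
      ContDiffAt ℝ ((⊤ : ℕ∞) : WithTop ℕ∞) H φ := by
  intro φ hφ
  obtain ⟨m, rfl⟩ := Nat.exists_eq_add_of_le' hn
  rw [hH, List.ofFn_succ]
  refine (IsSmoothOffCompact.convList_cons (S := {-1 / 2, 1 / 2}) _ _ ?_).contDiffAt φ ?_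
  · rw [← List.ofFn_succ (f := fun i => hfun (α i) (β i)), List.forall_mem_ofFn_iff]
    exact fun i => isSmoothOffCompact_hfun (h i)
  · rw [List.length_ofFn]
    intro hφ_mem
    obtain ⟨i, j, hij, rfl⟩ := exists_nsmul_add_nsmul_of_mem_nsmul_pair hφ_mem
    refine hφ j (by omega) ?_
    rw [← hij]
    push_cast
    simp only [nsmul_eq_mul]
    ring

/-- For `α₁,…,αₙ,β₁,…,βₙ ∈ ℂ` with `Re(βᵢ - αᵢ) > 0`, the `n`-fold
convolution `H = h_{α₁,β₁} ∗ ⋯ ∗ h_{αₙ,βₙ}` is infinitely differentiable at every point of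
`ℝ ∖ {-n/2 + k : k = 0, 1, …, n}`. -/
theorem convolution_smooth (n : ℕ) (hn : 1 ≤ n) (α β : Fin n → ℂ)
    (h : ∀ i, 0 < (β i - α i).re)
    (H : ℝ → ℂ) (hH : H = convList (List.ofFn fun i => hfun (α i) (β i))) :
    ∀ φ : ℝ, (∀ k : ℕ, k ≤ n → φ ≠ -(n : ℝ) / 2 + (k : ℝ)) →
      ContDiffAt ℝ ((⊤ : ℕ∞) : WithTop ℕ∞) H φ := by
  exact convolution_smooth_general n hn α β (fun i => neg_one_lt_zero.trans (h i)) H hH
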